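/- With the interpolated function $K$ as in the context, for every $x \in \mathbb{R}$ one has $\partial_y K(x,y) < 0$ for all $1 < y < \Lambda_3$ and $\partial_y K(x,y) > 0$ for all $y > \Lambda_3$. Consequently, the critical points of $K$ in the region $\mathbb{R} \times (1,\infty)$ are exactly the points $(2\pi k, \Lambda_3)$ with $k \in \mathbb{Z}$. -/

import Mathlib

/-- The Kepler effective Hamiltonian `H₂(y) = -1/(2y²) - y`. -/
noncomputable def H2K (y : ℝ) : ℝ := -(1 / (2 * y ^ 2)) - y

/-- `F(x,y) = ½(y - Λ₃)² - cos(x/2) + B`. -/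
noncomputable def Ffun (Λ3 B : ℝ) (x y : ℝ) : ℝ :=
  (y - Λ3) ^ 2 / 2 - Real.cos (x / 2) + B

/-- The interpolated function `K(x,y) = (1 - f(y)) H₂(y) + f(y) F(x,y)`. -/
noncomputable def Kfun (Λ3 B : ℝ) (f : ℝ → ℝ) (x y : ℝ) : ℝ :=
  (1 - f y) * H2K y + f y * Ffun Λ3 B x y

/-!
The `y`-derivative of `K` is `(1 - f) H₂' + f ∂_y F + f' (F - H₂)`. For `1 < y < Λ₃` the first two
terms form a convex combination of negative numbers, and the last one is nonpositive because `f` is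
monotone and `B` is chosen so that `F ≤ H₂` on the transition interval. To the right of that
interval `K = F`, so `∂_y K = y - Λ₃` vanishes only at `y = Λ₃`, where `∂_x K = sin (x / 2) / 2`.
-/

open Filter Set Topology

theorem deriv_interpolation_neg {f g h : ℝ → ℝ} {y : ℝ} (hf : DifferentiableAt ℝ f y)
    (hg : DifferentiableAt ℝ g y) (hh : DifferentiableAt ℝ h y) (hf_mem : f y ∈ Icc (0 : ℝ) 1)
    (hf' : 0 ≤ deriv f y) (hg' : deriv g y < 0) (hh' : deriv h y < 0) (hhg : h y ≤ g y) :
    deriv (fun t => (1 - f t) * g t + f t * h t) y < 0 := by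
  have hderiv : deriv (fun t => (1 - f t) * g t + f t * h t) y =
      ((1 - f y) * deriv g y + f y * deriv h y) + deriv f y * (h y - g y) := by
    refine HasDerivAt.deriv (((hf.hasDerivAt.const_sub 1).mul hg.hasDerivAt).add
      (hf.hasDerivAt.mul hh.hasDerivAt) |>.congr_deriv ?_)
    ring
  have hconvex : (1 - f y) * deriv g y + f y * deriv h y < 0 :=
    convex_Iio (0 : ℝ) hg' hh' (sub_nonneg.2 hf_mem.2) hf_mem.1 (sub_add_cancel 1 (f y))
  rw [hderiv]
  exact add_neg_of_neg_of_nonpos hconvex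
    (mul_nonpos_of_nonneg_of_nonpos hf' (sub_nonpos.2 hhg))

theorem hasDerivAt_H2K {y : ℝ} (hy : y ≠ 0) : HasDerivAt H2K (1 / y ^ 3 - 1) y := by
  have hinv : HasDerivAt (fun t : ℝ => 1 / (2 * t ^ 2)) (-(1 / y ^ 3)) y := by
    refine ((hasDerivAt_const y 1).fun_div ((hasDerivAt_pow 2 y).const_mul 2)
      (by positivity)).congr_deriv ?_
    field_simp
    norm_num
  exact (hinv.fun_neg.fun_sub (hasDerivAt_id' y)).congr_deriv (by rw [neg_neg])

theorem deriv_H2K_neg {y : ℝ} (hy : 1 < y) : deriv H2K y < 0 := by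
  rw [(hasDerivAt_H2K (by positivity)).deriv, sub_neg, div_lt_one (by positivity)]
  exact one_lt_pow₀ hy three_ne_zero

theorem hasDerivAt_Ffun (Λ3 B x y : ℝ) : HasDerivAt (Ffun Λ3 B x) (y - Λ3) y := by
  refine (((((hasDerivAt_id' y).sub_const Λ3).fun_pow 2).div_const 2).sub_const
    (Real.cos (x / 2)) |>.add_const B).congr_deriv ?_
  norm_num

theorem hasDerivAt_Ffun_left (Λ3 B x y : ℝ) :
    HasDerivAt (fun t => Ffun Λ3 B t y) (Real.sin (x / 2) / 2) x := by
  refine ((((hasDerivAt_id' x).div_const 2).cos.const_sub ((y - Λ3) ^ 2 / 2)).add_const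
    B).congr_deriv ?_
  ring

theorem Ffun_le_H2K {Λ3 B y : ℝ} (hB : (y - Λ3) ^ 2 / 2 + B + 1 + 1 / (2 * y ^ 2) + y ≤ 0)
    (x : ℝ) : Ffun Λ3 B x y ≤ H2K y := by
  have hcos := Real.neg_one_le_cos (x / 2)
  unfold Ffun H2K
  linarith

theorem deriv_Kfun_of_eventuallyEq_zero {f : ℝ → ℝ} {y : ℝ} (hf : ∀ᶠ t in 𝓝 y, f t = 0)
    (Λ3 B x : ℝ) : deriv (Kfun Λ3 B f x) y = deriv H2K y := by
  refine EventuallyEq.deriv_eq ?_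
  filter_upwards [hf] with t ht
  simp only [Kfun, ht, sub_zero, one_mul, zero_mul, add_zero]

theorem deriv_Kfun_of_eventuallyEq_one {f : ℝ → ℝ} {y : ℝ} (hf : ∀ᶠ t in 𝓝 y, f t = 1)
    (Λ3 B x : ℝ) : deriv (Kfun Λ3 B f x) y = y - Λ3 := by
  rw [← (hasDerivAt_Ffun Λ3 B x y).deriv]
  refine EventuallyEq.deriv_eq ?_
  filter_upwards [hf] with t ht
  simp only [Kfun, ht, sub_self, zero_mul, one_mul, zero_add]

theorem deriv_Kfun_left (Λ3 B : ℝ) (f : ℝ → ℝ) (x y : ℝ) :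
    deriv (fun t => Kfun Λ3 B f t y) x = f y * (Real.sin (x / 2) / 2) :=
  (((hasDerivAt_Ffun_left Λ3 B x y).const_mul (f y)).const_add ((1 - f y) * H2K y)).deriv

theorem deriv_Kfun_neg {Λ3 B a b x y : ℝ} {f : ℝ → ℝ} (hFH : ∀ t ∈ Icc a b, Ffun Λ3 B x t ≤ H2K t)
    (hf : Differentiable ℝ f) (hfmono : Monotone f) (hf0 : ∀ t, t ≤ a → f t = 0)
    (hf1 : ∀ t, b ≤ t → f t = 1) (hy : 1 < y) (hyΛ3 : y < Λ3) :
    deriv (Kfun Λ3 B f x) y < 0 := by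
  rcases lt_or_ge y a with hya | hay
  · rw [deriv_Kfun_of_eventuallyEq_zero ((eventually_le_nhds hya).mono hf0)]
    exact deriv_H2K_neg hy
  rcases lt_or_ge b y with hby | hyb
  · rw [deriv_Kfun_of_eventuallyEq_one ((eventually_ge_nhds hby).mono hf1)]
    exact sub_neg.2 hyΛ3
  have hf_mem : f y ∈ Icc (0 : ℝ) 1 := ⟨hf0 a le_rfl ▸ hfmono hay, hf1 b le_rfl ▸ hfmono hyb⟩
  have hF := hasDerivAt_Ffun Λ3 B x y
  exact deriv_interpolation_neg (hf y) (hasDerivAt_H2K (by positivity)).differentiableAt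
    hF.differentiableAt hf_mem hfmono.deriv_nonneg (deriv_H2K_neg hy)
    (hF.deriv ▸ sub_neg.2 hyΛ3) (hFH y ⟨hay, hyb⟩)

theorem sin_half_eq_zero_iff {x : ℝ} :
    Real.sin (x / 2) = 0 ↔ ∃ k : ℤ, x = 2 * Real.pi * k := by
  rw [Real.sin_eq_zero_iff]
  refine exists_congr fun k => ?_
  constructor <;> intro h <;> linarith

theorem stmt_7_general {Λ3 B a b : ℝ} {f : ℝ → ℝ} (hb : b < Λ3)
    (hFH : ∀ x, ∀ y ∈ Icc a b, Ffun Λ3 B x y ≤ H2K y)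
    (hf : Differentiable ℝ f) (hfmono : Monotone f)
    (hf0 : ∀ y, y ≤ a → f y = 0) (hf1 : ∀ y, b ≤ y → f y = 1) :
    (∀ x y : ℝ, 1 < y → y < Λ3 → deriv (Kfun Λ3 B f x) y < 0) ∧
    (∀ x y : ℝ, Λ3 < y → 0 < deriv (Kfun Λ3 B f x) y) ∧
    (∀ x y : ℝ, 1 < y →
      ((deriv (fun x' => Kfun Λ3 B f x' y) x = 0 ∧ deriv (Kfun Λ3 B f x) y = 0) ↔
        (∃ k : ℤ, x = 2 * Real.pi * k) ∧ y = Λ3)) := by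
  have hneg : ∀ x y : ℝ, 1 < y → y < Λ3 → deriv (Kfun Λ3 B f x) y < 0 := fun x _ =>
    deriv_Kfun_neg (hFH x) hf hfmono hf0 hf1
  have hright : ∀ x y : ℝ, Λ3 ≤ y → deriv (Kfun Λ3 B f x) y = y - Λ3 := fun x y hy =>
    deriv_Kfun_of_eventuallyEq_one ((eventually_ge_nhds (hb.trans_le hy)).mono hf1) Λ3 B x
  refine ⟨hneg, fun x y hy => hright x y hy.le ▸ sub_pos.2 hy, fun x y hy => ?_⟩
  have hzero_y : deriv (Kfun Λ3 B f x) y = 0 ↔ y = Λ3 := by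
    rcases lt_or_ge y Λ3 with hlt | hge
    · exact iff_of_false (hneg x y hy hlt).ne hlt.ne
    · rw [hright x y hge, sub_eq_zero]
  have hzero_x : deriv (fun x' => Kfun Λ3 B f x' Λ3) x = 0 ↔ ∃ k : ℤ, x = 2 * Real.pi * k := by
    rw [deriv_Kfun_left, hf1 Λ3 hb.le, one_mul, div_eq_zero_iff, or_iff_left two_ne_zero,
      sin_half_eq_zero_iff]
  rw [hzero_y]
  refine and_congr_left ?_
  rintro rfl
  exact hzero_x

/-- Claim (5.6) of the paper: `∂_y K < 0` for `1 < y < Λ₃` and `∂_y K > 0` for `y > Λ₃`;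
consequently the critical points of `K` in `ℝ × (1,∞)` are exactly `(2πk, Λ₃)`, `k ∈ ℤ`. -/
theorem stmt_7 (Λ2 Λ3 ε0 B : ℝ) (f : ℝ → ℝ)
    (hΛ2 : 1 < Λ2) (hΛ23 : Λ2 < Λ3)
    (hε0 : 0 < ε0) (hε0' : ε0 < (Λ3 - Λ2) / 2)
    (hB : ∀ y ∈ Set.Icc (Λ2 + ε0) (Λ2 + 2 * ε0),
      (y - Λ3) ^ 2 / 2 + B + 1 + 1 / (2 * y ^ 2) + y ≤ 0)
    (hf : ContDiff ℝ (⊤ : ℕ∞) f) (hfmono : Monotone f)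
    (hfrange : ∀ y, f y ∈ Set.Icc (0 : ℝ) 1)
    (hf0 : ∀ y, y ≤ Λ2 + ε0 → f y = 0)
    (hf1 : ∀ y, Λ2 + 2 * ε0 ≤ y → f y = 1) :
    (∀ x y : ℝ, 1 < y → y < Λ3 → deriv (Kfun Λ3 B f x) y < 0) ∧
    (∀ x y : ℝ, Λ3 < y → 0 < deriv (Kfun Λ3 B f x) y) ∧
    (∀ x y : ℝ, 1 < y →
      ((deriv (fun x' => Kfun Λ3 B f x' y) x = 0 ∧ deriv (Kfun Λ3 B f x) y = 0) ↔
        (∃ k : ℤ, x = 2 * Real.pi * k) ∧ y = Λ3)) := by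
  exact stmt_7_general (by linarith) (fun x y hy => Ffun_le_H2K (hB y hy) x)
    (hf.differentiable (by simp)) hfmono hf0 hf1
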